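/- Let T ∈ (0,1). If Z(T) = ∑_{p ∈ dom U} 2^{−|p|/T} is a right-computable real number, then T is itself a right-computable real number. -/

import Mathlib

open Filter

/-- A set of finite binary strings is prefix-free if no element of it is a
prefix of another (distinct) element of it. -/
def PrefixFree (S : Set (List Bool)) : Prop :=
  ∀ p ∈ S, ∀ q ∈ S, p <+: q → p = q

/-- A computer: a partial recursive function from finite binary strings to
finite binary strings whose domain is a prefix-free set. -/
structure Computer where
  f : List Bool →. List Bool
  partrec : Partrec f
  prefixFree : PrefixFree {p | (f p).Dom}

/-- The domain of a computer. -/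
def Computer.domain (C : Computer) : Set (List Bool) := {p | (C.f p).Dom}

/-- A computer `U` is optimal if every computer can be simulated on `U` with
only a constant increase in program length. -/
def IsOptimal (U : Computer) : Prop :=
  ∀ C : Computer, ∃ d : ℕ, ∀ p : List Bool, (C.f p).Dom →
    ∃ p' : List Bool, p'.length ≤ p.length + d ∧ ∀ s, s ∈ C.f p → s ∈ U.f p'

/-- Program-size complexity `H(s)`: the minimal length of a program `p`
with `U(p) = s`. -/
noncomputable def H (U : Computer) (s : List Bool) : ℕ :=
  sInf {n | ∃ p : List Bool, p.length = n ∧ s ∈ U.f p}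

/-- The `n`-th bit (`n ≥ 1`) of the base-two expansion of `x mod 1`
(the expansion chosen with infinitely many zeros). -/
noncomputable def binDigit (x : ℝ) (n : ℕ) : Bool :=
  decide (⌊Int.fract x * 2 ^ n⌋ % 2 = 1)

/-- The first `n` bits of the base-two expansion of `x mod 1` (with
infinitely many zeros). -/
noncomputable def bits (x : ℝ) (n : ℕ) : List Bool :=
  (List.range n).map fun i => binDigit x (i + 1)

/-- A real `x` is weakly Chaitin `D`-random (w.r.t. the computer `U`). -/
def WeaklyChaitinRandom (U : Computer) (D x : ℝ) : Prop :=
  ∃ c : ℝ, ∀ n : ℕ, 1 ≤ n → D * n - c ≤ (H U (bits x n) : ℝ)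

/-- A real `x` is Chaitin `D`-random (w.r.t. the computer `U`). -/
def ChaitinRandom (U : Computer) (D x : ℝ) : Prop :=
  Tendsto (fun n : ℕ => (H U (bits x n) : ℝ) - D * n) atTop atTop

/-- A real `x` is `D`-compressible (w.r.t. the computer `U`). -/
def DCompressible (U : Computer) (D x : ℝ) : Prop :=
  Filter.limsup (fun n : ℕ => (H U (bits x n) : ℝ) / n) atTop ≤ D

/-- A computable real number. -/
def ComputableReal (T : ℝ) : Prop :=
  ∃ f : ℕ → ℚ, Computable f ∧ ∀ n : ℕ, 1 ≤ n → |T - (f n : ℝ)| < 1 / n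

/-- A right-computable real number. -/
def RightComputable (T : ℝ) : Prop :=
  ∃ g : ℕ → ℚ, Computable g ∧ (∀ n, T ≤ (g n : ℝ)) ∧
    Tendsto (fun n => ((g n : ℚ) : ℝ)) atTop (nhds T)

/-- A left-computable real number. -/
def LeftComputable (T : ℝ) : Prop := RightComputable (-T)

/-- The term `2 ^ (-|p| / T)` of the partition function `Z(T)`. -/
noncomputable def zterm (U : Computer) (T : ℝ) (p : U.domain) : ℝ :=
  (2 : ℝ) ^ (-((p : List Bool).length : ℝ) / T)

/-- The term `|p| ^ Q * 2 ^ (-|p| / T)` of `W(Q,T)`. -/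
noncomputable def wterm (U : Computer) (Q T : ℝ) (p : U.domain) : ℝ :=
  ((p : List Bool).length : ℝ) ^ Q * (2 : ℝ) ^ (-((p : List Bool).length : ℝ) / T)

/-- The term `|p| * 2 ^ (-|p| / T)` of `W(1,T)`. -/
noncomputable def wlterm (U : Computer) (T : ℝ) (p : U.domain) : ℝ :=
  ((p : List Bool).length : ℝ) * (2 : ℝ) ^ (-((p : List Bool).length : ℝ) / T)

/-- The term `|p| ^ 2 * 2 ^ (-|p| / T)` of `W(2,T)`. -/
noncomputable def wsqterm (U : Computer) (T : ℝ) (p : U.domain) : ℝ :=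
  ((p : List Bool).length : ℝ) ^ 2 * (2 : ℝ) ^ (-((p : List Bool).length : ℝ) / T)

/-- A lower-computable function `f : ℕ⁺ → [0,∞)` (represented on `ℕ`,
with all conditions imposed on positive arguments). -/
def LowerComputableFun (f : ℕ → ℝ) : Prop :=
  ∃ a : ℕ → ℕ → ℚ, Computable₂ a ∧
    (∀ k n : ℕ, 1 ≤ k → 1 ≤ n → (a k n : ℝ) ≤ f n) ∧
    (∀ n : ℕ, 1 ≤ n → Tendsto (fun k => ((a k n : ℚ) : ℝ)) atTop (nhds (f n)))

/-- A lower-computable semi-measure on finite binary strings. -/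
def LowerComputableSemiMeasure (r : List Bool → ℝ) : Prop :=
  (∀ s, 0 ≤ r s) ∧ (∀ s, r s ≤ 1) ∧ Summable r ∧ (∑' s, r s) ≤ 1 ∧
    ∃ f : ℕ → List Bool → ℚ, Computable₂ f ∧
      (∀ n s, ((f n s : ℚ) : ℝ) ≤ r s) ∧
      (∀ s, Tendsto (fun n => ((f n s : ℚ) : ℝ)) atTop (nhds (r s)))

/-- A universal probability. -/
def UniversalProbability (m : List Bool → ℝ) : Prop :=
  LowerComputableSemiMeasure m ∧
    ∀ r : List Bool → ℝ, LowerComputableSemiMeasure r →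
      ∃ c : ℝ, 0 < c ∧ ∀ s, c * r s ≤ m s

/-!
Each weight `2 ^ (-|p| / r)` with `p ≠ []` is strictly increasing in `r`, so `Z` is strictly
increasing, and `T < r` holds if and only if some finite partial sum of `Z(r)` exceeds `Z(T)`.
Comparing finite partial sums rather than `Z(r)` itself makes this meaningful for `r > 1` as well,
where `Z(r)` may diverge. The condition is recursively enumerable in the rational `r`: the domain
of `U` can be enumerated, the finitely many weights can be approximated from below by fractions,
and `Z(T)` can be approximated from above. So the rationals above `T` can be listed computably, and
the running minimum of the list converges to `T` from above.
-/

section RecursivelyEnumerable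

variable {α β : Type*} [Primcodable α] [Primcodable β] {p q : α → Prop}

theorem rePred_comp (hp : REPred p) {f : β → α} (hf : Computable f) :
    REPred fun b => p (f b) :=
  Partrec.comp hp hf

theorem computablePred_comp (hp : ComputablePred p) {f : β → α} (hf : Computable f) :
    ComputablePred fun b => p (f b) := by
  obtain ⟨_, hdec⟩ := hp
  exact ⟨fun b => inferInstance, hdec.comp hf⟩

theorem rePred_and (hp : REPred p) (hq : REPred q) : REPred fun a => p a ∧ q a :=
  (Partrec.bind hp (Partrec.to₂ (Partrec.comp hq Computable.fst))).dom_re.of_eq fun a => by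
    simp [Part.assert]

theorem rePred_exists_nat_of_computable {f : α → ℕ → Bool} (hf : Computable₂ f) :
    REPred fun a => ∃ n, f a n = true :=
  (Partrec.rfind hf.partrec₂).dom_re.of_eq fun a => by
    simp

theorem exists_primrec_stages (hp : REPred p) :
    ∃ t : ℕ → α → Prop, PrimrecRel t ∧ Monotone t ∧ ∀ a, p a ↔ ∃ k, t k a := by
  obtain ⟨c, hc⟩ := Nat.Partrec.Code.exists_code.1 hp
  refine ⟨fun k a => (c.evaln k (Encodable.encode a)).isSome, ?_, ?_, fun a => ?_⟩
  · exact Primrec₂.primrecRel <| (Primrec.option_isSome.comp (Nat.Partrec.Code.primrec_evaln.comp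
      ((Primrec.fst.pair (Primrec.const c)).pair (Primrec.encode.comp Primrec.snd)))).of_eq
        fun _ => by simp
  · intro k k' hk a
    simp only [Option.isSome_iff_exists, le_Prop_eq]
    exact Exists.imp fun x => Nat.Partrec.Code.evaln_mono hk
  · have hdom : p a ↔ (c.eval (Encodable.encode a)).Dom := by simp [hc, Part.assert]
    simp only [hdom, Part.dom_iff_mem, Nat.Partrec.Code.evaln_complete,
      Option.isSome_iff_exists, Option.mem_def]
    exact exists_comm

theorem exists_computable_partial_enumeration (hp : REPred p) :
    ∃ e : ℕ → Option α, Computable e ∧ ∀ a, p a ↔ ∃ n, e n = some a := by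
  classical
  obtain ⟨t, ht, -, hpt⟩ := exists_primrec_stages hp
  refine ⟨fun n => (Encodable.decode (α := α × ℕ) n).bind fun x =>
    (Option.guard (fun x : α × ℕ => t x.2 x.1) x).map Prod.fst, ?_, fun a => ?_⟩
  · have hguard : PrimrecRel fun (_ : ℕ × (α × ℕ)) (x : α × ℕ) => t x.2 x.1 :=
      PrimrecRel.comp ht (Primrec.snd.comp Primrec.snd) (Primrec.fst.comp Primrec.snd)
    exact (Primrec.option_bind Primrec.decode (Primrec.option_map
      (Primrec.option_guard hguard Primrec.snd) (Primrec.fst.comp Primrec.snd).to₂).to₂).to_comp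
  · rw [hpt]
    constructor
    · rintro ⟨k, hk⟩
      exact ⟨Encodable.encode (a, k), by simp [hk]⟩
    · rintro ⟨n, hn⟩
      obtain ⟨x, -, hx⟩ := Option.bind_eq_some_iff.1 hn
      obtain ⟨y, hy, rfl⟩ := Option.map_eq_some_iff.1 hx
      obtain ⟨rfl, ht⟩ := Option.guard_eq_some_iff.1 hy
      exact ⟨_, by simpa using ht⟩

theorem exists_computable_range_eq (hp : REPred p) (hne : ∃ a, p a) :
    ∃ f : ℕ → α, Computable f ∧ Set.range f = {a | p a} := by
  obtain ⟨a₀, ha₀⟩ := hne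
  obtain ⟨e, he, hpe⟩ := exists_computable_partial_enumeration hp
  refine ⟨fun n => (e n).getD a₀, Computable.option_getD he (Computable.const a₀), ?_⟩
  ext a
  constructor
  · rintro ⟨n, rfl⟩
    rcases h : e n with _ | b
    · simpa [h] using ha₀
    · simpa [h] using (hpe b).2 ⟨n, h⟩
  · intro ha
    obtain ⟨n, hn⟩ := (hpe a).1 ha
    exact ⟨n, by simp [hn]⟩

theorem rePred_exists {r : α × β → Prop} (hr : REPred r) : REPred fun a => ∃ b, r (a, b) := by
  classical
  obtain ⟨e, he, hre⟩ := exists_computable_partial_enumeration hr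
  have hfst : Computable fun n => (e n).map Prod.fst :=
    Computable.option_map he (Computable.fst.comp Computable.snd).to₂
  have hmatch : Computable₂ fun (a : α) n => decide ((e n).map Prod.fst = some a) :=
    Primrec.eq.decide.to_comp.comp (hfst.comp Computable.snd)
      (Computable.option_some.comp Computable.fst)
  refine (rePred_exists_nat_of_computable hmatch).of_eq fun a => ?_
  simp only [decide_eq_true_eq, Option.map_eq_some_iff, Prod.exists, exists_and_right,
    exists_eq_right, hre]
  exact exists_comm

theorem rePred_forall_mem_list {r : α × β → Prop} (hr : REPred r) :
    REPred fun x : α × List β => ∀ b ∈ x.2, r (x.1, b) := by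
  classical
  obtain ⟨t, ht, hmono, hrt⟩ := exists_primrec_stages hr
  have hstage : PrimrecRel fun (b : β) (x : ℕ × α) => t x.1 (x.2, b) :=
    PrimrecRel.comp ht (Primrec.fst.comp Primrec.snd)
      ((Primrec.snd.comp Primrec.snd).pair Primrec.fst)
  have hbounded : PrimrecRel fun (x : α × List β) (k : ℕ) => ∀ b ∈ x.2, t k (x.1, b) :=
    PrimrecRel.comp hstage.forall_mem_list (Primrec.snd.comp Primrec.fst)
      (Primrec.snd.pair (Primrec.fst.comp Primrec.fst))
  refine (rePred_exists_nat_of_computable hbounded.decide.to_comp).of_eq fun x => ?_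
  simp only [decide_eq_true_eq, hrt]
  refine ⟨fun ⟨k, hk⟩ b hb => ⟨k, hk b hb⟩, fun h => ?_⟩
  choose! k hk using h
  obtain ⟨K, hK⟩ := (x.2.toFinset.image k).bddAbove
  exact ⟨K, fun b hb => hmono (hK (by simpa using ⟨b, hb, rfl⟩)) _ (hk b hb)⟩

end RecursivelyEnumerable

section RationalCodes

open Encodable Denumerable

theorem primrecRel_coprime : PrimrecRel Nat.Coprime := by
  have hdvd : PrimrecRel fun d n : ℕ => d ∣ n :=
    (PrimrecRel.comp Primrec.eq (Primrec.nat_mod.comp Primrec.snd Primrec.fst)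
      (Primrec.const 0)).of_eq fun _ => (Nat.dvd_iff_mod_eq_zero ..).symm
  have hone : PrimrecRel fun (k : ℕ) (x : ℕ × ℕ) => k ∣ x.1 ∧ k ∣ x.2 → k = 1 :=
    (((PrimrecRel.comp hdvd Primrec.fst (Primrec.fst.comp Primrec.snd)).and
      (PrimrecRel.comp hdvd Primrec.fst (Primrec.snd.comp Primrec.snd))).not.or
        (PrimrecRel.comp Primrec.eq Primrec.fst (Primrec.const 1))).of_eq fun _ =>
          imp_iff_not_or.symm
  have hrange : Primrec fun x : ℕ × ℕ => List.range (x.1 + x.2 + 1) :=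
    Primrec.list_range.comp (Primrec.succ.comp Primrec.nat_add)
  refine (hone.forall_mem_list.comp hrange Primrec.id).of_eq fun ⟨m, n⟩ => ?_
  simp only [List.mem_range]
  refine ⟨fun h => h _ ?_ ⟨Nat.gcd_dvd_left m n, Nat.gcd_dvd_right m n⟩,
    fun h k _ hk => Nat.eq_one_of_dvd_coprimes h hk.1 hk.2⟩
  rcases m.eq_zero_or_pos with rfl | hm
  · simp
  · have := Nat.gcd_le_left n hm
    omega

theorem encode_int_natCast (n : ℕ) : encode (n : ℤ) = 2 * n := rfl

theorem encode_int_negSucc (n : ℕ) : encode (Int.negSucc n) = 2 * n + 1 := rfl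

theorem primrec_int_natCast : Primrec ((↑) : ℕ → ℤ) :=
  Primrec.encode_iff.1 ((Primrec.nat_mul.comp (Primrec.const 2) Primrec.id).of_eq
    encode_int_natCast)

theorem primrecPred_even : PrimrecPred fun n : ℕ => n % 2 = 0 :=
  PrimrecRel.comp Primrec.eq (Primrec.nat_mod.comp Primrec.id (Primrec.const 2)) (Primrec.const 0)

theorem primrec_int_toNat : Primrec Int.toNat := by
  have hcode : Primrec fun n : ℕ => if n % 2 = 0 then n / 2 else 0 :=
    Primrec.ite primrecPred_even (Primrec.nat_div.comp Primrec.id (Primrec.const 2))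
      (Primrec.const 0)
  refine (hcode.comp Primrec.encode).of_eq fun z => ?_
  cases z with
  | ofNat n => simp [encode_int_natCast]
  | negSucc n => simp [encode_int_negSucc]

theorem primrec_int_neg : Primrec (Neg.neg : ℤ → ℤ) := by
  have hcode : Primrec fun n : ℕ => if n % 2 = 0 then n - 1 else n + 1 :=
    Primrec.ite primrecPred_even Primrec.pred Primrec.succ
  refine Primrec.encode_iff.1 ((hcode.comp Primrec.encode).of_eq fun z => ?_)
  rcases z with (_ | n) | n
  · rfl
  · change (if 2 * (n + 1) % 2 = 0 then 2 * (n + 1) - 1 else 2 * (n + 1) + 1) = 2 * n + 1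
    rw [if_pos (by omega)]
    omega
  · change (if (2 * n + 1) % 2 = 0 then 2 * n + 1 - 1 else 2 * n + 1 + 1) = 2 * (n + 1)
    rw [if_neg (by omega)]
    omega

theorem primrec_int_natAbs : Primrec Int.natAbs :=
  (Primrec.nat_add.comp primrec_int_toNat (primrec_int_toNat.comp primrec_int_neg)).of_eq
    fun z => by simp

theorem primrecPred_int_mul_natCast_lt :
    PrimrecPred fun x : (ℤ × ℕ) × (ℤ × ℕ) => x.1.1 * x.2.2 < x.2.1 * x.1.2 := by
  have hpos : Primrec₂ fun (z : ℤ) (n : ℕ) => z.toNat * n :=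
    Primrec.nat_mul.comp (primrec_int_toNat.comp Primrec.fst) Primrec.snd
  have hneg : Primrec₂ fun (z : ℤ) (n : ℕ) => (-z).toNat * n :=
    hpos.comp (primrec_int_neg.comp Primrec.fst) Primrec.snd
  have hz : Primrec fun x : (ℤ × ℕ) × (ℤ × ℕ) => x.1.1 := Primrec.fst.comp Primrec.fst
  have hw : Primrec fun x : (ℤ × ℕ) × (ℤ × ℕ) => x.2.1 := Primrec.fst.comp Primrec.snd
  have hm : Primrec fun x : (ℤ × ℕ) × (ℤ × ℕ) => x.1.2 := Primrec.snd.comp Primrec.fst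
  have hn : Primrec fun x : (ℤ × ℕ) × (ℤ × ℕ) => x.2.2 := Primrec.snd.comp Primrec.snd
  refine (PrimrecRel.comp Primrec.nat_lt
    (Primrec.nat_add.comp (hpos.comp hz hn) (hneg.comp hw hm))
    (Primrec.nat_add.comp (hpos.comp hw hm) (hneg.comp hz hn))).of_eq fun x => ?_
  conv_rhs => rw [← Int.toNat_sub_toNat_neg x.1.1, ← Int.toNat_sub_toNat_neg x.2.1]
  zify
  constructor <;> intro h <;> linarith

theorem computable_nth {P : ℕ → Prop} (hP : PrimrecPred P) (hinf : (Set.ofPred P).Infinite) :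
    Computable (Nat.nth P) := by
  classical
  have hcount : Primrec (Nat.count P) :=
    (Primrec.list_length.comp ((Primrec.listFilter hP).comp Primrec.list_range)).of_eq fun n => by
      rw [Nat.count, List.countP_eq_length_filter]
  have hex : ∀ n, ∃ x, P x ∧ Nat.count P x = n := fun n =>
    ⟨Nat.nth P n, Nat.nth_mem_of_infinite hinf n, Nat.count_nth_of_infinite hinf n⟩
  have hdec : ComputablePred fun x : ℕ × ℕ => P x.2 ∧ Nat.count P x.2 = x.1 :=
    ((hP.comp Primrec.snd).and
      (PrimrecRel.comp Primrec.eq (hcount.comp Primrec.snd) Primrec.fst)).computablePred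
  refine (Computable.find hdec hex).of_eq fun n => ?_
  obtain ⟨hPx, hx⟩ := Nat.find_spec (hex n)
  conv_rhs => rw [← hx, Nat.nth_count hPx]

theorem encode_ofNat_ofEncodableOfInfinite (α : Type*) [inst : Encodable α] [Infinite α] (n : ℕ) :
    @encode α inst (@ofNat α (ofEncodableOfInfinite α) n) =
      Nat.nth (· ∈ Set.range (@encode α inst)) n := by
  let _ := @decidableRangeEncode α inst
  have hinf : Infinite (Set.range (@encode α inst)) :=
    Infinite.of_injective _ (Equiv.ofInjective _ encode_injective).injective
  have hofNat : @ofNat α (ofEncodableOfInfinite α) n =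
      (equivRangeEncode α).symm (Nat.Subtype.ofNat (Set.range (@encode α inst)) n) := by
    unfold ofEncodableOfInfinite
    rw [ofEquiv_ofNat]
    congr 1
  rw [hofNat, Nat.nth_apply_eq_orderIsoOfNat (p := (· ∈ Set.range (@encode α inst)))
    (Set.infinite_coe_iff.1 hinf)]
  refine Eq.trans ?_ (congrArg Subtype.val
    (Nat.Subtype.orderIsoOfNat_apply (s := Set.range (@encode α inst)) (n := n))).symm
  generalize Nat.Subtype.ofNat (Set.range (@encode α inst)) n = y
  obtain ⟨a, rfl⟩ := (equivRangeEncode α).surjective y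
  rw [Equiv.symm_apply_apply]
  rfl

/-- The code of `q` as the pair of its numerator and denominator. The codes that define
computability on `ℚ` are different ones: the instance `Denumerable ℚ` numbers the values of
`ratCode` in increasing order. -/
def ratCode (q : ℚ) : ℕ := encode (q.num, q.den)

theorem ratCode_ofNat (n : ℕ) : ratCode (ofNat ℚ n) = Nat.nth (· ∈ Set.range ratCode) n :=
  encode_ofNat_ofEncodableOfInfinite ℚ n

theorem mem_range_ratCode_iff (n : ℕ) :
    n ∈ Set.range ratCode ↔
      0 < (ofNat (ℤ × ℕ) n).2 ∧ (ofNat (ℤ × ℕ) n).1.natAbs.Coprime (ofNat (ℤ × ℕ) n).2 := by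
  constructor
  · rintro ⟨q, rfl⟩
    simpa only [ratCode, ofNat_encode] using ⟨q.den_pos, q.reduced⟩
  · rintro ⟨hpos, hcop⟩
    exact ⟨⟨_, _, hpos.ne', hcop⟩, encode_ofNat (α := ℤ × ℕ) n⟩

theorem primrecPred_mem_range_ratCode : PrimrecPred (· ∈ Set.range ratCode) := by
  have hnum : Primrec fun n => (ofNat (ℤ × ℕ) n).1 := Primrec.fst.comp (Primrec.ofNat _)
  have hden : Primrec fun n => (ofNat (ℤ × ℕ) n).2 := Primrec.snd.comp (Primrec.ofNat _)
  exact ((PrimrecRel.comp Primrec.nat_lt (Primrec.const 0) hden).and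
    (PrimrecRel.comp primrecRel_coprime (primrec_int_natAbs.comp hnum) hden)).of_eq
      fun n => (mem_range_ratCode_iff n).symm

theorem computable_ratCode : Computable ratCode := by
  have hinj : Function.Injective ratCode := fun q r h => by
    obtain ⟨hnum, hden⟩ := Prod.ext_iff.1 (encode_injective h)
    exact Rat.ext hnum hden
  exact ((computable_nth primrecPred_mem_range_ratCode
    (Set.infinite_range_of_injective hinj)).comp Computable.encode).of_eq
      fun q => by rw [← ratCode_ofNat, ofNat_encode]

theorem computable_rat_num_den : Computable fun q : ℚ => (q.num, q.den) :=
  ((Computable.ofNat (ℤ × ℕ)).comp computable_ratCode).of_eq fun _ => ofNat_encode _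

theorem computable_rat_num : Computable Rat.num :=
  Computable.fst.comp computable_rat_num_den

theorem computable_rat_den : Computable Rat.den :=
  Computable.snd.comp computable_rat_num_den

theorem computablePred_rat_lt : ComputablePred fun x : ℚ × ℚ => x.1 < x.2 :=
  (computablePred_comp primrecPred_int_mul_natCast_lt.computablePred
    ((computable_rat_num_den.comp Computable.fst).pair
      (computable_rat_num_den.comp Computable.snd))).of_eq fun _ => (Rat.lt_iff _ _).symm

theorem computablePred_rat_mul_natCast_lt_natCast :
    ComputablePred fun x : ℚ × ℕ × ℕ => x.1 * x.2.1 < x.2.2 := by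
  have hint : Computable fun x : ℚ × ℕ × ℕ => ((x.2.2 : ℤ), x.2.1) :=
    (primrec_int_natCast.to_comp.comp (Computable.snd.comp Computable.snd)).pair
      (Computable.fst.comp Computable.snd)
  refine (computablePred_comp primrecPred_int_mul_natCast_lt.computablePred
    ((computable_rat_num_den.comp Computable.fst).pair hint)).of_eq fun ⟨q, K, s⟩ => ?_
  have hden : (0 : ℚ) < q.den := by exact_mod_cast q.den_pos
  conv_rhs => rw [← Rat.num_div_den q, div_mul_eq_mul_div, div_lt_iff₀ hden]
  norm_cast

end RationalCodes

section RightComputability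

/-- The minimum of the first `n + 1` terms of a sequence. It turns an enumeration of rationals with
infimum `T` into a sequence converging to `T`. -/
def runningMin {α : Type*} [Min α] (f : ℕ → α) : ℕ → α
  | 0 => f 0
  | n + 1 => min (runningMin f n) (f (n + 1))

theorem runningMin_le {α : Type*} [LinearOrder α] (f : ℕ → α) : ∀ n, runningMin f n ≤ f n
  | 0 => le_rfl
  | _ + 1 => min_le_right _ _

theorem antitone_runningMin {α : Type*} [LinearOrder α] (f : ℕ → α) : Antitone (runningMin f) :=
  antitone_nat_of_succ_le fun _ => min_le_left _ _

theorem exists_runningMin_eq {α : Type*} [LinearOrder α] (f : ℕ → α) :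
    ∀ n, ∃ m, runningMin f n = f m
  | 0 => ⟨0, rfl⟩
  | n + 1 => (min_choice (runningMin f n) (f (n + 1))).elim
      (fun h => (exists_runningMin_eq f n).imp fun _ => h.trans) fun h => ⟨n + 1, h⟩

theorem computable_runningMin {f : ℕ → ℚ} (hf : Computable f) : Computable (runningMin f) := by
  have hnext : Computable fun x : ℕ × ℕ × ℚ => f (x.2.1 + 1) :=
    hf.comp (Computable.succ.comp (Computable.fst.comp Computable.snd))
  have hprev : Computable fun x : ℕ × ℕ × ℚ => x.2.2 := Computable.snd.comp Computable.snd
  have hmin : Computable₂ fun (_ : ℕ) (x : ℕ × ℚ) => min x.2 (f (x.1 + 1)) :=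
    (Computable.cond (computablePred_rat_lt.decide.comp (hnext.pair hprev)) hnext hprev).of_eq
      fun x => by by_cases h : f (x.2.1 + 1) < x.2.2 <;> simp [h, le_of_lt, le_of_not_gt]
  refine (Computable.nat_rec Computable.id (Computable.const (f 0)) hmin).of_eq fun n => ?_
  induction n with
  | zero => rfl
  | succ n ih => exact congrArg (min · (f (n + 1))) ih

variable {T : ℝ}

theorem RightComputable.of_isGLB {f : ℕ → ℚ} (hf : Computable f)
    (hT : IsGLB (Set.range fun n => (f n : ℝ)) T) : RightComputable T := by
  have hle : ∀ n, T ≤ (runningMin f n : ℚ) := fun n => by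
    obtain ⟨m, hm⟩ := exists_runningMin_eq f n
    exact hm ▸ hT.1 ⟨m, rfl⟩
  have hanti : Antitone fun n => ((runningMin f n : ℚ) : ℝ) :=
    fun m n h => Rat.cast_le.2 (antitone_runningMin f h)
  refine ⟨runningMin f, computable_runningMin hf, hle, tendsto_atTop_isGLB hanti
    ⟨Set.forall_mem_range.2 hle, fun b hb => hT.2 (Set.forall_mem_range.2 fun n => ?_)⟩⟩
  exact (hb ⟨n, rfl⟩).trans (Rat.cast_le.2 (runningMin_le f n))

theorem RightComputable.of_rePred_lt (hT : REPred fun q : ℚ => T < q) : RightComputable T := by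
  obtain ⟨f, hf, hrange⟩ := exists_computable_range_eq hT (exists_rat_gt T)
  have hmem : ∀ q : ℚ, q ∈ Set.range f ↔ T < q := fun q => by rw [hrange]; rfl
  refine .of_isGLB hf ⟨Set.forall_mem_range.2 fun n => ((hmem _).1 ⟨n, rfl⟩).le, fun b hb => ?_⟩
  by_contra! hlt
  obtain ⟨q, hTq, hqb⟩ := exists_rat_btwn hlt
  obtain ⟨n, rfl⟩ := (hmem q).2 hTq
  exact (hb ⟨n, rfl⟩).not_gt hqb

theorem RightComputable.rePred_mul_natCast_lt_natCast (hT : RightComputable T) :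
    REPred fun x : ℕ × ℕ => T * x.1 < x.2 := by
  obtain ⟨g, hg, hTg, hlim⟩ := hT
  have hdata : Computable fun x : (ℕ × ℕ) × ℕ => (g x.2, x.1.1, x.1.2) :=
    (hg.comp Computable.snd).pair Computable.fst
  have happrox := (computablePred_comp computablePred_rat_mul_natCast_lt_natCast hdata).to_re
  refine (rePred_exists happrox).of_eq fun ⟨K, s⟩ => ⟨fun ⟨n, hn⟩ => ?_, fun h => ?_⟩
  · have hn : (g n : ℝ) * K < s := by exact_mod_cast hn
    exact (mul_le_mul_of_nonneg_right (hTg n) K.cast_nonneg).trans_lt hn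
  · obtain ⟨n, hn⟩ := ((hlim.mul_const (K : ℝ)).eventually (gt_mem_nhds h)).exists
    exact ⟨n, by exact_mod_cast hn⟩

end RightComputability

section BoltzmannWeight

/-- The Boltzmann weight, in base two, of a program of length `n` at temperature `t`. -/
noncomputable def boltzmannWeight (t : ℝ) (n : ℕ) : ℝ := 2 ^ (-(n : ℝ) / t)

theorem boltzmannWeight_pos (t : ℝ) (n : ℕ) : 0 < boltzmannWeight t n :=
  Real.rpow_pos_of_pos two_pos _

theorem monotoneOn_boltzmannWeight (n : ℕ) :
    MonotoneOn (boltzmannWeight · n) (Set.Ioi 0) := fun s hs t _ hst => by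
  simp only [boltzmannWeight, neg_div]
  gcongr
  exact one_le_two

theorem strictMonoOn_boltzmannWeight {n : ℕ} (hn : 0 < n) :
    StrictMonoOn (boltzmannWeight · n) (Set.Ioi 0) := fun s hs t _ hst => by
  simp only [boltzmannWeight, neg_div]
  exact Real.rpow_lt_rpow_of_exponent_lt one_lt_two
    (neg_lt_neg (div_lt_div_of_pos_left (Nat.cast_pos.2 hn) hs hst))

theorem boltzmannWeight_one (n : ℕ) : boltzmannWeight 1 n = (1 / 2) ^ n := by
  rw [boltzmannWeight, div_one, Real.rpow_neg two_pos.le, Real.rpow_natCast, one_div, inv_pow]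

theorem exists_finset_tsum_lt_sum {ι : Type*} {f g : ι → ℝ} (hf : Summable f) (hfg : f ≤ g)
    {i : ι} (hi : f i < g i) : ∃ F : Finset ι, ∑' j, f j < ∑ j ∈ F, g j := by
  have hnear : ∀ᶠ F in atTop, ∑' j, f j - (g i - f i) < ∑ j ∈ F, f j :=
    hf.hasSum.eventually (lt_mem_nhds (sub_lt_self _ (sub_pos.2 hi)))
  obtain ⟨F, hF, hiF⟩ := (hnear.and (eventually_ge_atTop {i})).exists
  have hgap : g i - f i ≤ ∑ j ∈ F, (g j - f j) :=
    Finset.single_le_sum (f := fun j => g j - f j) (fun j _ => sub_nonneg.2 (hfg j))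
      (Finset.singleton_subset_iff.1 hiF)
  rw [Finset.sum_sub_distrib] at hgap
  exact ⟨F, by linarith⟩

theorem lt_iff_exists_tsum_boltzmannWeight_lt_sum {ι : Type*} {ℓ : ι → ℕ} (hpos : ∃ i, 0 < ℓ i)
    {T r : ℝ} (hT : 0 < T) (hr : 0 < r) (hsum : Summable fun i => boltzmannWeight T (ℓ i)) :
    T < r ↔
      ∃ F : Finset ι, ∑' i, boltzmannWeight T (ℓ i) < ∑ i ∈ F, boltzmannWeight r (ℓ i) := by
  constructor
  · intro hTr
    obtain ⟨i, hi⟩ := hpos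
    exact exists_finset_tsum_lt_sum hsum
      (fun j => monotoneOn_boltzmannWeight (ℓ j) hT hr hTr.le)
      (strictMonoOn_boltzmannWeight hi hT hr hTr)
  · rintro ⟨F, hF⟩
    by_contra! hrT
    have hle : ∑ i ∈ F, boltzmannWeight r (ℓ i) ≤ ∑ i ∈ F, boltzmannWeight T (ℓ i) :=
      Finset.sum_le_sum fun i _ => monotoneOn_boltzmannWeight (ℓ i) hr hT hrT
    exact hF.not_ge (hle.trans (hsum.sum_le_tsum F fun i _ => (boltzmannWeight_pos T (ℓ i)).le))

theorem natCast_le_mul_boltzmannWeight_iff {r : ℚ} (hr : 0 < r) (m K n : ℕ) :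
    (m : ℝ) ≤ K * boltzmannWeight r n ↔
      m ^ r.num.toNat * 2 ^ (n * r.den) ≤ K ^ r.num.toNat := by
  have hnum : 0 < r.num := Rat.num_pos.2 hr
  have hr_eq : (r : ℝ) * r.den = r.num.toNat := by
    have hmul := Rat.mul_den_eq_num r
    rw [← Int.toNat_of_nonneg hnum.le] at hmul
    exact_mod_cast hmul
  have hpow : boltzmannWeight r n ^ r.num.toNat = (2 ^ (n * r.den))⁻¹ := by
    have hr0 : (r : ℝ) ≠ 0 := Rat.cast_ne_zero.2 hr.ne'
    rw [boltzmannWeight, ← Real.rpow_mul_natCast two_pos.le, ← hr_eq, ← Real.rpow_natCast,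
      ← Real.rpow_neg two_pos.le]
    congr 1
    push_cast
    field_simp
  have hweight := (boltzmannWeight_pos r n).le
  rw [← pow_le_pow_iff_left₀ m.cast_nonneg (by positivity)
    (Int.pos_iff_toNat_pos.1 hnum).ne', mul_pow, hpow, ← div_eq_mul_inv,
    le_div_iff₀ (by positivity)]
  norm_cast

end BoltzmannWeight

section Minorants

variable {α : Type*} {p : α → Prop} {x : α → ℝ} {y : ℝ} {K : ℕ} {w : List (α × ℕ)}

/-- The list `w` assigns fractions `m / K ≤ x a` to finitely many distinct points `a` of `p`. These
are the finite certificates for lower bounds on the sum of `x` over `p`; a common denominator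
keeps them within natural number arithmetic. -/
def IsMinorant (p : α → Prop) (x : α → ℝ) (K : ℕ) (w : List (α × ℕ)) : Prop :=
  (w.map Prod.fst).Nodup ∧ ∀ e ∈ w, p e.1 ∧ (e.2 : ℝ) ≤ K * x e.1

theorem IsMinorant.exists_finset_lt_sum (hw : IsMinorant p x K w)
    (hy : y * K < (w.map Prod.snd).sum) : ∃ F : Finset {a // p a}, y < ∑ a ∈ F, x a := by
  classical
  obtain ⟨hnodup, hmem⟩ := hw
  have hp : ∀ a ∈ (w.map Prod.fst).toFinset, p a := by
    simp only [List.mem_toFinset, List.mem_map]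
    rintro _ ⟨e, he, rfl⟩
    exact (hmem e he).1
  refine ⟨(w.map Prod.fst).toFinset.subtype p, ?_⟩
  rw [Finset.sum_subtype_of_mem x hp, List.sum_toFinset x hnodup]
  have hle : ((w.map Prod.snd).sum : ℝ) ≤ K * ((w.map Prod.fst).map x).sum := by
    rw [Nat.cast_list_sum, List.map_map, List.map_map, ← List.sum_map_mul_left]
    exact List.sum_le_sum fun e he => (hmem e he).2
  rw [mul_comm] at hle
  exact lt_of_mul_lt_mul_right (hy.trans_le hle) K.cast_nonneg

theorem exists_mul_lt_sum_floor (F : Finset α) (hy : y < ∑ a ∈ F, x a) :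
    ∃ K : ℕ, y * K < (∑ a ∈ F, ⌊K * x a⌋₊ : ℕ) := by
  obtain ⟨K, hK⟩ := exists_nat_gt (F.card / (∑ a ∈ F, x a - y))
  rw [div_lt_iff₀ (sub_pos.2 hy)] at hK
  have hfloor : ∑ a ∈ F, (K * x a - 1) ≤ ∑ a ∈ F, (⌊K * x a⌋₊ : ℝ) :=
    Finset.sum_le_sum fun a _ => (Nat.sub_one_lt_floor _).le
  rw [Finset.sum_sub_distrib, ← Finset.mul_sum, Finset.sum_const, nsmul_one] at hfloor
  refine ⟨K, ?_⟩
  push_cast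
  linarith

theorem exists_finset_lt_sum_iff_exists_isMinorant (hx : 0 ≤ x) :
    (∃ F : Finset {a // p a}, y < ∑ a ∈ F, x a) ↔
      ∃ K w, IsMinorant p x K w ∧ y * K < (w.map Prod.snd).sum := by
  refine ⟨fun ⟨F, hF⟩ => ?_, fun ⟨K, w, hw, hy⟩ => hw.exists_finset_lt_sum hy⟩
  obtain ⟨K, hK⟩ := exists_mul_lt_sum_floor F hF
  refine ⟨K, F.toList.map fun a : {a // p a} => (a.1, ⌊K * x a⌋₊), ⟨?_, fun e he => ?_⟩, ?_⟩
  · rw [List.map_map]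
    exact F.nodup_toList.map Subtype.val_injective
  · obtain ⟨a, -, rfl⟩ := List.mem_map.1 he
    exact ⟨a.2, Nat.floor_le (mul_nonneg K.cast_nonneg (hx a))⟩
  · rw [List.map_map]
    exact hK.trans_eq (congrArg Nat.cast (Finset.sum_map_toList F _).symm)

theorem lt_iff_exists_isMinorant {ℓ : α → ℕ}
    (hpos : ∃ a, p a ∧ 0 < ℓ a) {T r : ℝ} (hT : 0 < T) (hr : 0 < r)
    (hsum : Summable fun a : {a // p a} => boltzmannWeight T (ℓ a)) :
    T < r ↔ ∃ K w, IsMinorant p (fun a => boltzmannWeight r (ℓ a)) K w ∧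
      (∑' a : {a // p a}, boltzmannWeight T (ℓ a)) * K < (w.map Prod.snd).sum := by
  have hpos_subtype : ∃ a : {a // p a}, 0 < ℓ a := by simpa using hpos
  rw [lt_iff_exists_tsum_boltzmannWeight_lt_sum hpos_subtype hT hr hsum]
  exact exists_finset_lt_sum_iff_exists_isMinorant fun a => (boltzmannWeight_pos r (ℓ a)).le

end Minorants

section SemiDecidability

variable {α : Type*} [Primcodable α]

theorem primrecPred_list_nodup : PrimrecPred (List.Nodup : List α → Prop) := by
  classical
  have hne : PrimrecRel fun (i : ℕ) (x : ℕ × List α) => x.2[i]? ≠ x.2[x.1]? :=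
    PrimrecPred.not (PrimrecRel.comp Primrec.eq
      (Primrec.list_getElem?.comp (Primrec.snd.comp Primrec.snd) Primrec.fst)
      (Primrec.list_getElem?.comp (Primrec.snd.comp Primrec.snd)
        (Primrec.fst.comp Primrec.snd)))
  have hbefore : PrimrecRel fun (j : ℕ) (l : List α) => ∀ i ∈ List.range j, l[i]? ≠ l[j]? :=
    PrimrecRel.comp hne.forall_mem_list (Primrec.list_range.comp Primrec.fst) Primrec.id
  refine (PrimrecRel.comp hbefore.forall_mem_list
    (Primrec.list_range.comp Primrec.list_length) Primrec.id).of_eq fun l => ?_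
  simp only [List.mem_range, List.nodup_iff_getElem?_ne_getElem?]
  exact ⟨fun h i j hij hj => h j hj i hij, fun h j hj i hij => h i j hij hj⟩

theorem primrec_nat_pow : Primrec₂ ((· ^ ·) : ℕ → ℕ → ℕ) :=
  (Primrec.nat_rec' Primrec.snd (Primrec.const 1)
    (Primrec.nat_mul.comp (Primrec.snd.comp Primrec.snd)
      (Primrec.fst.comp Primrec.fst)).to₂).of_eq fun x => by
        obtain ⟨m, n⟩ := x
        induction n with
        | zero => rfl
        | succ n ih => exact congrArg (· * m) ih

theorem primrec_list_sum : Primrec (List.sum : List ℕ → ℕ) :=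
  (Primrec.list_foldr Primrec.id (Primrec.const 0) (Primrec.nat_add.comp
    (Primrec.fst.comp Primrec.snd) (Primrec.snd.comp Primrec.snd)).to₂).of_eq fun _ => rfl

theorem rePred_natCast_le_mul_boltzmannWeight :
    REPred fun x : ℚ × ℕ × ℕ × ℕ =>
      0 < x.1 ∧ (x.2.2.1 : ℝ) ≤ x.2.1 * boltzmannWeight x.1 x.2.2.2 := by
  have hpos : REPred fun x : ℚ × ℕ × ℕ × ℕ => 0 < x.1 :=
    rePred_comp computablePred_rat_lt.to_re ((Computable.const 0).pair Computable.fst)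
  have hr : Computable fun x : ℚ × ℕ × ℕ × ℕ => (x.1.num.toNat, x.1.den) :=
    (primrec_int_toNat.to_comp.comp (computable_rat_num.comp Computable.fst)).pair
      (computable_rat_den.comp Computable.fst)
  have hle : PrimrecPred fun x : (ℕ × ℕ) × ℕ × ℕ × ℕ =>
      x.2.2.1 ^ x.1.1 * 2 ^ (x.2.2.2 * x.1.2) ≤ x.2.1 ^ x.1.1 := by
    have hu : Primrec fun x : (ℕ × ℕ) × ℕ × ℕ × ℕ => x.1.1 := Primrec.fst.comp Primrec.fst
    have hv : Primrec fun x : (ℕ × ℕ) × ℕ × ℕ × ℕ => x.1.2 := Primrec.snd.comp Primrec.fst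
    have hK : Primrec fun x : (ℕ × ℕ) × ℕ × ℕ × ℕ => x.2.1 := Primrec.fst.comp Primrec.snd
    have hmn : Primrec fun x : (ℕ × ℕ) × ℕ × ℕ × ℕ => x.2.2 := Primrec.snd.comp Primrec.snd
    exact PrimrecRel.comp Primrec.nat_le
      (Primrec.nat_mul.comp (primrec_nat_pow.comp (Primrec.fst.comp hmn) hu)
        (primrec_nat_pow.comp (Primrec.const 2) (Primrec.nat_mul.comp (Primrec.snd.comp hmn) hv)))
      (primrec_nat_pow.comp hK hu)
  exact (rePred_and hpos (rePred_comp hle.computablePred.to_re (hr.pair Computable.snd))).of_eq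
    fun x => and_congr_right fun h => (natCast_le_mul_boltzmannWeight_iff h ..).symm

theorem rePred_isMinorant_boltzmannWeight {p : α → Prop} (hp : REPred p) {ℓ : α → ℕ}
    (hℓ : Computable ℓ) :
    REPred fun x : ℚ × ℕ × List (α × ℕ) =>
      0 < x.1 ∧ IsMinorant p (fun a => boltzmannWeight x.1 (ℓ a)) x.2.1 x.2.2 := by
  have hpos : REPred fun x : ℚ × ℕ × List (α × ℕ) => 0 < x.1 :=
    rePred_comp computablePred_rat_lt.to_re ((Computable.const 0).pair Computable.fst)
  have hnodup : REPred fun x : ℚ × ℕ × List (α × ℕ) => (x.2.2.map Prod.fst).Nodup :=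
    rePred_comp primrecPred_list_nodup.computablePred.to_re
      ((Primrec.list_map Primrec.id (Primrec.fst.comp Primrec.snd).to₂).to_comp.comp
        (Computable.snd.comp Computable.snd))
  have hentry : REPred fun x : (ℚ × ℕ) × α × ℕ =>
      p x.2.1 ∧ 0 < x.1.1 ∧ (x.2.2 : ℝ) ≤ x.1.2 * boltzmannWeight x.1.1 (ℓ x.2.1) := by
    have ha : Computable fun x : (ℚ × ℕ) × α × ℕ => x.2.1 := Computable.fst.comp Computable.snd
    have hentry_data : Computable fun x : (ℚ × ℕ) × α × ℕ => (x.1.1, x.1.2, x.2.2, ℓ x.2.1) :=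
      (Computable.fst.comp Computable.fst).pair ((Computable.snd.comp Computable.fst).pair
        ((Computable.snd.comp Computable.snd).pair (hℓ.comp ha)))
    have hle := rePred_comp rePred_natCast_le_mul_boltzmannWeight hentry_data
    exact rePred_and (rePred_comp hp ha) hle
  have hentries : REPred fun x : ℚ × ℕ × List (α × ℕ) => ∀ e ∈ x.2.2,
      p e.1 ∧ 0 < x.1 ∧ (e.2 : ℝ) ≤ x.2.1 * boltzmannWeight x.1 (ℓ e.1) :=
    rePred_comp (rePred_forall_mem_list hentry) ((Computable.fst.pair
      (Computable.fst.comp Computable.snd)).pair (Computable.snd.comp Computable.snd))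
  refine (rePred_and hpos (rePred_and hnodup hentries)).of_eq fun x => ?_
  exact and_congr_right fun h => by simp only [IsMinorant, h, true_and]

end SemiDecidability

theorem rightComputable_Z_imp_rightComputable_T_general {α : Type*} [Primcodable α] {p : α → Prop}
    (hp : REPred p) {ℓ : α → ℕ} (hℓ : Computable ℓ) (hpos : ∃ a, p a ∧ 0 < ℓ a) {T : ℝ}
    (hT : 0 < T) (hsum : Summable fun a : {a // p a} => boltzmannWeight T (ℓ a))
    (hZ : RightComputable (∑' a : {a // p a}, boltzmannWeight T (ℓ a))) :
    RightComputable T := by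
  have hlt_iff : ∀ r : ℚ, (∃ c : ℕ × List (α × ℕ),
      (0 < r ∧ IsMinorant p (fun a => boltzmannWeight r (ℓ a)) c.1 c.2) ∧
        (∑' a : {a // p a}, boltzmannWeight T (ℓ a)) * c.1 < (c.2.map Prod.snd).sum) ↔
      T < r := fun r => by
    simp only [Prod.exists, and_assoc, exists_and_left]
    have hiff (hr : 0 < r) := lt_iff_exists_isMinorant hpos hT (Rat.cast_pos.2 hr) hsum
    refine ⟨fun ⟨hr, h⟩ => (hiff hr).2 h, fun h => ?_⟩
    have hr : 0 < r := Rat.cast_pos.1 (hT.trans h)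
    exact ⟨hr, (hiff hr).1 h⟩
  have hsnd : Primrec fun w : List (α × ℕ) => w.map Prod.snd :=
    Primrec.list_map Primrec.id (Primrec.snd.comp Primrec.snd).to₂
  have hbound : Computable fun x : ℚ × ℕ × List (α × ℕ) => (x.2.1, (x.2.2.map Prod.snd).sum) :=
    (Computable.fst.comp Computable.snd).pair
      ((primrec_list_sum.comp hsnd).to_comp.comp (Computable.snd.comp Computable.snd))
  have hgap := rePred_comp hZ.rePred_mul_natCast_lt_natCast hbound
  have hminorant := rePred_isMinorant_boltzmannWeight hp hℓ
  exact .of_rePred_lt ((rePred_exists (rePred_and hminorant hgap)).of_eq hlt_iff)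

section Computers

theorem PrefixFree.subset {S R : Set (List Bool)} (hS : PrefixFree S) (hR : R ⊆ S) :
    PrefixFree R :=
  fun p hp q hq => hS p (hR hp) q (hR hq)

theorem PrefixFree.eq_singleton_nil {S : Set (List Bool)} (hS : PrefixFree S) (hnil : [] ∈ S) :
    S = {[]} :=
  Set.eq_singleton_iff_unique_mem.2 ⟨hnil, fun q hq => (hS [] hnil q hq List.nil_prefix).symm⟩

theorem PrefixFree.uniquelyDecodable {S : Set (List Bool)} (hS : PrefixFree S) (hnil : [] ∉ S) :
    InformationTheory.UniquelyDecodable S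
  | [], [], _, _, _ => rfl
  | [], w :: L, _, hmem, h => by
    obtain ⟨rfl, -⟩ := List.append_eq_nil_iff.1 h.symm
    exact absurd (hmem _ List.mem_cons_self) hnil
  | w :: L, [], hmem, _, h => by
    obtain ⟨rfl, -⟩ := List.append_eq_nil_iff.1 h
    exact absurd (hmem _ List.mem_cons_self) hnil
  | w₁ :: L₁, w₂ :: L₂, hmem₁, hmem₂, h => by
    simp only [List.forall_mem_cons] at hmem₁ hmem₂
    rw [List.flatten_cons, List.flatten_cons] at h
    obtain rfl : w₁ = w₂ :=
      (List.prefix_or_prefix_of_prefix (List.prefix_append _ _)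
        (h.symm ▸ List.prefix_append _ _)).elim
        (hS _ hmem₁.1 _ hmem₂.1) fun hle => (hS _ hmem₂.1 _ hmem₁.1 hle).symm
    rw [PrefixFree.uniquelyDecodable hS hnil L₁ L₂ hmem₁.2 hmem₂.2 (List.append_cancel_left h)]

theorem PrefixFree.summable_boltzmannWeight {S : Set (List Bool)} (hS : PrefixFree S) {T : ℝ}
    (hT0 : 0 < T) (hT1 : T ≤ 1) : Summable fun p : S => boltzmannWeight T p.1.length := by
  by_cases hnil : [] ∈ S
  · have : Finite S := hS.eq_singleton_nil hnil ▸ Set.finite_singleton _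
    exact Summable.of_finite
  refine summable_of_sum_le (c := 1) (fun p => (boltzmannWeight_pos ..).le) fun F => ?_
  have hF : ↑(F.map (Function.Embedding.subtype _)) ⊆ S := by simp
  calc ∑ p ∈ F, boltzmannWeight T p.1.length
      ≤ ∑ p ∈ F, (1 / 2) ^ p.1.length := Finset.sum_le_sum fun p _ =>
        (monotoneOn_boltzmannWeight _ hT0 (Set.mem_Ioi.2 one_pos) hT1).trans_eq
          (boltzmannWeight_one _)
    _ = ∑ p ∈ F.map (Function.Embedding.subtype _), (1 / Fintype.card Bool : ℝ) ^ p.length := by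
        simp
    _ ≤ 1 := InformationTheory.kraft_mcmillan_inequality
        ((hS.subset hF).uniquelyDecodable fun h => hnil (hF h))

/-- The computer whose only program is the empty string, with output `s`. By simulating it, an
optimal computer has a program for `s`. -/
def constComputer (s : List Bool) : Computer where
  f p := if p = [] then Part.some s else Part.none
  partrec := (Partrec.cond (PrimrecRel.comp Primrec.eq Primrec.id (Primrec.const [])).decide.to_comp
    (Computable.const s).partrec Partrec.none).of_eq fun p => by simp [Bool.cond_decide]
  prefixFree := by
    have hdom : ∀ p : List Bool, (if p = [] then Part.some s else Part.none).Dom → p = [] :=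
      fun p hp => by_contra fun hne => by simp [hne] at hp
    exact fun p hp q hq _ => (hdom p hp).trans (hdom q hq).symm

theorem IsOptimal.exists_mem_f {U : Computer} (hU : IsOptimal U) (s : List Bool) :
    ∃ p, s ∈ U.f p := by
  obtain ⟨d, hd⟩ := hU (constComputer s)
  obtain ⟨p, -, hp⟩ := hd [] (by simp [constComputer])
  exact ⟨p, hp s (by simp [constComputer])⟩

theorem IsOptimal.exists_mem_domain_length_pos {U : Computer} (hU : IsOptimal U) :
    ∃ p ∈ U.domain, 0 < p.length := by
  obtain ⟨p, hp⟩ := hU.exists_mem_f []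
  obtain ⟨q, hq⟩ := hU.exists_mem_f [true]
  by_contra! hlength
  obtain rfl := List.length_eq_zero_iff.1 (Nat.le_zero.1 (hlength p (Part.dom_iff_mem.2 ⟨_, hp⟩)))
  obtain rfl := List.length_eq_zero_iff.1 (Nat.le_zero.1 (hlength q (Part.dom_iff_mem.2 ⟨_, hq⟩)))
  exact List.cons_ne_nil _ _ (Part.mem_unique hq hp)

end Computers

/-- **Theorem (paper Thm 18).** For `T ∈ (0,1)`, if `Z(T)` is right-computable
then `T` is right-computable. -/
theorem rightComputable_Z_imp_rightComputable_T (U : Computer)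
    (hU : IsOptimal U) (T : ℝ) (hT0 : 0 < T) (hT1 : T < 1)
    (hZ : RightComputable (∑' p, zterm U T p)) :
    RightComputable T :=
  rightComputable_Z_imp_rightComputable_T_general U.partrec.dom_re Computable.list_length
    hU.exists_mem_domain_length_pos hT0 (U.prefixFree.summable_boltzmannWeight hT0 hT1.le) hZ
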